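/- Let $A \in \mathbb{C}^{n\times n}$ be such that $\Gamma_{t,\mathbb{Q}}$-style count $\Sigma_t(A) \geq 2^{(n^2/t)^t}$ for $t = n^{1-1/(2d)}$, where the entries of $A$ are distinct powers of 2 indexed by a $t$-wise Sidon set. Then any factorization $A = P_1 \cdots P_d$ with matrices of dimensions at most $n^2 \times n^2$ has total sparsity more than $n^{1+1/(2d)}/2$ (for sufficiently large $n$ and constant $d \ge 2$). -/

import Mathlib

open Matrix

noncomputable def chainProd {E : Type*} [Semiring E] :
    (d : ℕ) → (dims : Fin (d + 1) → ℕ) →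
    ((i : Fin d) → Matrix (Fin (dims i.castSucc)) (Fin (dims i.succ)) E) →
    Matrix (Fin (dims ⟨0, Nat.succ_pos d⟩)) (Fin (dims (Fin.last d))) E
  | 0, _, _ => Matrix.of fun i j => if (i : ℕ) = (j : ℕ) then 1 else 0
  | d + 1, dims, P =>
      P ⟨0, Nat.succ_pos d⟩ * chainProd d (fun i => dims i.succ) (fun i => P i.succ)


/-!
Replace every nonzero entry of the factors `P i` by an indeterminate. An entry of the product
becomes a form of degree `d` in `s` variables with natural coefficients, whose coefficients add up
to a number of paths, hence to at most `s ^ d`. An element of `Σ_t(A)` is then the value, at one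
fixed point, of a form of degree `d * t` in `s` variables with small natural coefficients. There are
`s.multichoose (d * t)` monomials available, so few such forms and few elements of
`Σ_t(A)`: for `s ≤ n ^ (1 + 1 / (2 * d)) / 2` fewer than `2 ^ (n ^ 2 / t) ^ t`.
-/

open MvPolynomial

section ChainProd

theorem chainProd_map {E F : Type*} [Semiring E] [Semiring F] (f : E →+* F) (d : ℕ)
    (dims : Fin (d + 1) → ℕ)
    (P : (i : Fin d) → Matrix (Fin (dims i.castSucc)) (Fin (dims i.succ)) E) :
    (chainProd d dims P).map f = chainProd d dims fun i => (P i).map f := by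
  induction d with
  | zero =>
    ext a b
    simp only [chainProd, Matrix.map_apply, Matrix.of_apply]
    split_ifs
    exacts [map_one f, map_zero f]
  | succ d ih =>
    simp only [chainProd]
    rw [Matrix.map_mul, ih]

theorem isHomogeneous_chainProd {σ R : Type*} [CommSemiring R] (k d : ℕ)
    (dims : Fin (d + 1) → ℕ)
    (P : (i : Fin d) → Matrix (Fin (dims i.castSucc)) (Fin (dims i.succ)) (MvPolynomial σ R))
    (hP : ∀ i a b, (P i a b).IsHomogeneous k) (a b) :
    (chainProd d dims P a b).IsHomogeneous (d * k) := by
  induction d with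
  | zero =>
    simp only [chainProd, Matrix.of_apply, zero_mul]
    split_ifs
    exacts [isHomogeneous_one _ _, isHomogeneous_zero _ _ _]
  | succ d ih =>
    simp only [chainProd, Matrix.mul_apply]
    refine IsHomogeneous.sum _ _ _ fun c _ => ?_
    exact (add_one_mul d k).trans (add_comm _ _) ▸
      (hP ⟨0, Nat.succ_pos d⟩ a c).mul
        (ih (fun i => dims i.succ) (fun i => P i.succ) (fun i => hP i.succ) c b)

theorem chainProd_le_pow_of_sum_row_le {E : Type*} [Semiring E] [PartialOrder E]
    [IsOrderedRing E] [CanonicallyOrderedAdd E] (D : E) (d : ℕ) (dims : Fin (d + 1) → ℕ)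
    (P : (i : Fin d) → Matrix (Fin (dims i.castSucc)) (Fin (dims i.succ)) E)
    (hP : ∀ i a, ∑ b, P i a b ≤ D) (a b) :
    chainProd d dims P a b ≤ D ^ d := by
  induction d with
  | zero =>
    simp only [chainProd, Matrix.of_apply, pow_zero]
    split_ifs
    exacts [le_rfl, zero_le_one]
  | succ d ih =>
    simp only [chainProd, Matrix.mul_apply]
    calc ∑ c, P ⟨0, Nat.succ_pos d⟩ a c *
          chainProd d (fun i => dims i.succ) (fun i => P i.succ) c b
        ≤ ∑ c, P ⟨0, Nat.succ_pos d⟩ a c * D ^ d := by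
          gcongr with c
          exact ih (fun i => dims i.succ) (fun i => P i.succ) (fun i => hP i.succ) c b
      _ = (∑ c, P ⟨0, Nat.succ_pos d⟩ a c) * D ^ d := (Finset.sum_mul ..).symm
      _ ≤ D * D ^ d := by gcongr; exact hP ⟨0, Nat.succ_pos d⟩ a
      _ = D ^ (d + 1) := (pow_succ' D d).symm

end ChainProd

section BoundedForms

/-- The forms of degree `k` in the variables `σ` with natural coefficients at most `N`. Counting
them bounds the number of values they take at a point. -/
def boundedForms (σ : Type*) (k N : ℕ) : Set (MvPolynomial σ ℕ) :=
  {p | p.IsHomogeneous k ∧ ∀ m, p.coeff m ≤ N}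

theorem encard_boundedForms_le (σ : Type*) [Fintype σ] (k N : ℕ) :
    (boundedForms σ k N).encard ≤ ((N + 1) ^ (Fintype.card σ).multichoose k : ℕ) := by
  classical
  let monomials := Finset.finsuppAntidiag (Finset.univ : Finset σ) k
  let coeffs (p : MvPolynomial σ ℕ) (m : monomials) : ℕ := p.coeff m
  let box := Fintype.piFinset fun _ : monomials => Finset.range (N + 1)
  have card_box : box.card = (N + 1) ^ (Fintype.card σ).multichoose k := by
    simp [box, monomials, Finset.card_finsuppAntidiag_nat_eq_multichoose]
  have mapsTo_box : Set.MapsTo coeffs (boundedForms σ k N) box := fun p hp => by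
    simpa [box, coeffs, Nat.lt_succ_iff] using fun m _ => hp.2 m
  have injOn_coeffs : Set.InjOn coeffs (boundedForms σ k N) := fun p hp q hq hpq => by
    ext m
    by_cases hm : m.degree = k
    · have hmem : m ∈ monomials := by
        simpa [monomials, Finset.mem_finsuppAntidiag, Finsupp.degree_eq_sum] using hm
      exact congrFun hpq ⟨m, hmem⟩
    · rw [hp.1.coeff_eq_zero hm, hq.1.coeff_eq_zero hm]
  rw [← card_box, ← Set.encard_coe_eq_coe_finsetCard]
  exact Set.encard_le_encard_of_injOn mapsTo_box injOn_coeffs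

theorem coeff_le_eval_one {σ R : Type*} [CommSemiring R] [PartialOrder R] [IsOrderedRing R]
    [CanonicallyOrderedAdd R] (p : MvPolynomial σ R) (m : σ →₀ ℕ) :
    p.coeff m ≤ eval 1 p := by
  simp only [eval_eq, Pi.one_apply, one_pow, Finset.prod_const_one, mul_one]
  by_cases hm : m ∈ p.support
  · exact Finset.single_le_sum (f := fun m => p.coeff m) (fun _ _ => zero_le) hm
  · simp [notMem_support_iff.mp hm]

end BoundedForms

section SubsetSums

variable {m n : Type*}

/-- `Π_t(A)`, the set of products of `t` distinct entries of `A`; entries are distinct when their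
positions are. -/
def entryProducts {M : Type*} [CommMonoid M] (t : ℕ) (A : Matrix m n M) : Set M :=
  {y | ∃ T : Finset (m × n), T.card = t ∧ y = ∏ p ∈ T, A p.1 p.2}

/-- The set of sums of distinct elements of `Y`; the paper's `Σ_t(A)` is the cardinality of
`subsetSums (entryProducts t A)`. -/
def subsetSums {M : Type*} [AddCommMonoid M] (Y : Set M) : Set M :=
  {x | ∃ S : Finset M, ↑S ⊆ Y ∧ x = ∑ y ∈ S, y}

variable [Fintype m] [Fintype n] {R : Type*} [CommSemiring R]

theorem card_le_choose_of_subset_entryProducts {M : Type*} [CommMonoid M] {t : ℕ}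
    {A : Matrix m n M} {S : Finset M} (hS : ↑S ⊆ entryProducts t A) :
    S.card ≤ (Fintype.card m * Fintype.card n).choose t := by
  classical
  have hsub : S ⊆ (Finset.univ.powersetCard t).image fun T : Finset (m × n) =>
      ∏ p ∈ T, A p.1 p.2 := by
    intro y hy
    obtain ⟨T, hT, rfl⟩ := hS hy
    exact Finset.mem_image_of_mem _ (by simp [Finset.mem_powersetCard, hT])
  calc S.card ≤ _ := Finset.card_le_card hsub
    _ ≤ (Finset.univ.powersetCard t : Finset (Finset (m × n))).card := Finset.card_image_le
    _ = (Fintype.card m * Fintype.card n).choose t := by simp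

theorem subsetSums_entryProducts_subset_aeval_image {σ : Type*} {v : σ → R} {k M : ℕ}
    {B : Matrix m n (MvPolynomial σ ℕ)} (hB : ∀ a b, (B a b).IsHomogeneous k)
    (hM : ∀ a b, eval 1 (B a b) ≤ M) (t : ℕ) :
    subsetSums (entryProducts t (B.map (aeval v))) ⊆
      aeval v '' boundedForms σ (k * t) ((Fintype.card m * Fintype.card n).choose t * M ^ t) := by
  rintro x ⟨S, hS, rfl⟩
  have hS' : ∀ y ∈ S, ∃ T : Finset (m × n), T.card = t ∧ y = ∏ p ∈ T, aeval v (B p.1 p.2) :=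
    fun y hy => hS hy
  choose! T hcard hprod using hS'
  refine ⟨∑ y ∈ S, ∏ p ∈ T y, B p.1 p.2, ⟨?_, fun μ => ?_⟩, ?_⟩
  · refine IsHomogeneous.sum _ _ _ fun y hy => ?_
    simpa [hcard y hy, mul_comm] using
      IsHomogeneous.prod (T y) (fun p => B p.1 p.2) (fun _ => k) fun p _ => hB p.1 p.2
  · refine (coeff_le_eval_one _ μ).trans ?_
    have hterm : ∀ y ∈ S, eval 1 (∏ p ∈ T y, B p.1 p.2) ≤ M ^ t := fun y hy => by
      rw [map_prod, ← hcard y hy]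
      exact Finset.prod_le_pow_card _ _ _ fun p _ => hM p.1 p.2
    calc eval 1 (∑ y ∈ S, ∏ p ∈ T y, B p.1 p.2)
        = ∑ y ∈ S, eval 1 (∏ p ∈ T y, B p.1 p.2) := map_sum _ _ _
      _ ≤ S.card * M ^ t := Finset.sum_le_card_nsmul _ _ _ hterm
      _ ≤ _ := by gcongr; exact card_le_choose_of_subset_entryProducts hS
  · simp only [map_sum, map_prod]
    exact Finset.sum_congr rfl fun y hy => (hprod y hy).symm

theorem ncard_subsetSums_entryProducts_le {σ : Type*} [Fintype σ] {v : σ → R} {k M : ℕ}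
    {B : Matrix m n (MvPolynomial σ ℕ)} (hB : ∀ a b, (B a b).IsHomogeneous k)
    (hM : ∀ a b, eval 1 (B a b) ≤ M) (t : ℕ) :
    (subsetSums (entryProducts t (B.map (aeval v)))).ncard ≤
      ((Fintype.card m * Fintype.card n).choose t * M ^ t + 1) ^
        (Fintype.card σ).multichoose (k * t) :=
  ENat.toNat_le_of_le_natCast <|
    (Set.encard_le_encard (subsetSums_entryProducts_subset_aeval_image hB hM t)).trans <|
      (Set.encard_image_le _ _).trans (encard_boundedForms_le _ _ _)

end SubsetSums

section GenericFactors

variable {R : Type*} {d : ℕ} {dims : Fin (d + 1) → ℕ}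

section Zero

variable [Zero R]
  (P : (i : Fin d) → Matrix (Fin (dims i.castSucc)) (Fin (dims i.succ)) R)

/-- The positions of the nonzero entries of the factors `P i`; they index the indeterminates of the
generic factorization. -/
abbrev NonzeroEntry : Type :=
  Σ i : Fin d, {p : Fin (dims i.castSucc) × Fin (dims i.succ) // P i p.1 p.2 ≠ 0}

/-- The total number of nonzero entries of the factors `P i`. -/
noncomputable def totalSparsity : ℕ :=
  ∑ i, Set.ncard {p : Fin (dims i.castSucc) × Fin (dims i.succ) | P i p.1 p.2 ≠ 0}

open Classical in
/-- The factor `P i` with each nonzero entry replaced by its own indeterminate. -/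
noncomputable def genericFactor (i : Fin d) :
    Matrix (Fin (dims i.castSucc)) (Fin (dims i.succ)) (MvPolynomial (NonzeroEntry P) ℕ) :=
  Matrix.of fun a b => if h : P i a b ≠ 0 then X ⟨i, (a, b), h⟩ else 0

open Classical in
theorem card_nonzeroEntry : Fintype.card (NonzeroEntry P) = totalSparsity P := by
  rw [Fintype.card_sigma]
  refine Finset.sum_congr rfl fun i _ => ?_
  rw [← Nat.card_eq_fintype_card]
  exact Nat.card_coe_set_eq _

theorem isHomogeneous_genericFactor (i a b) : (genericFactor P i a b).IsHomogeneous 1 := by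
  simp only [genericFactor, Matrix.of_apply]
  split_ifs
  exacts [isHomogeneous_X _ _, isHomogeneous_zero _ _ _]

theorem sum_row_genericFactor_map_eval_one_le (i a) :
    ∑ b, (genericFactor P i).map (eval 1) a b ≤ totalSparsity P := by
  classical
  have hrow : ∑ b, (genericFactor P i).map (eval 1) a b =
      Fintype.card {b // P i a b ≠ 0} := by
    rw [Fintype.card_subtype, Finset.card_filter]
    refine Finset.sum_congr rfl fun b _ => ?_
    by_cases h : P i a b = 0 <;> simp [genericFactor, h]
  rw [hrow, ← card_nonzeroEntry]
  refine Fintype.card_le_of_injective (fun b => ⟨i, (a, b.1), b.2⟩) fun b c hbc => ?_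
  simpa [Subtype.ext_iff] using hbc

end Zero

variable [CommSemiring R]
  (P : (i : Fin d) → Matrix (Fin (dims i.castSucc)) (Fin (dims i.succ)) R)

theorem genericFactor_map_aeval (i : Fin d) :
    (genericFactor P i).map (aeval fun q : NonzeroEntry P => P q.1 q.2.1.1 q.2.1.2) = P i := by
  ext a b
  by_cases h : P i a b = 0 <;> simp [genericFactor, h]

theorem ncard_subsetSums_submatrix_chainProd_le {m n : Type*} [Fintype m] [Fintype n]
    (f : m → Fin (dims ⟨0, Nat.succ_pos d⟩)) (g : n → Fin (dims (Fin.last d))) (t : ℕ) :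
    (subsetSums (entryProducts t ((chainProd d dims P).submatrix f g))).ncard ≤
      ((Fintype.card m * Fintype.card n).choose t * (totalSparsity P ^ d) ^ t + 1) ^
        (totalSparsity P).multichoose (d * t) := by
  classical
  let generic := chainProd d dims (genericFactor P)
  have map_generic : generic.map (aeval fun q : NonzeroEntry P => P q.1 q.2.1.1 q.2.1.2) =
      chainProd d dims P :=
    (chainProd_map (aeval _ : MvPolynomial (NonzeroEntry P) ℕ →ₐ[ℕ] R).toRingHom _ _ _).trans <|
      congrArg _ <| funext <| genericFactor_map_aeval P
  have homogeneous (a b) : (generic a b).IsHomogeneous d := by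
    simpa using isHomogeneous_chainProd 1 d dims _ (isHomogeneous_genericFactor P) a b
  have eval_one_le (a b) : eval 1 (generic a b) ≤ totalSparsity P ^ d :=
    (congrFun₂ (chainProd_map (eval 1) d dims (genericFactor P)) a b).trans_le <|
      chainProd_le_pow_of_sum_row_le _ d dims _ (sum_row_genericFactor_map_eval_one_le P) a b
  rw [← map_generic, ← card_nonzeroEntry]
  exact ncard_subsetSums_entryProducts_le (B := generic.submatrix f g)
    (fun a b => homogeneous (f a) (g b))
    (fun a b => card_nonzeroEntry P ▸ eval_one_le (f a) (g b)) t

end GenericFactors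

section Estimates

theorem multichoose_le_exp_mul_div_pow (s k : ℕ) :
    (s.multichoose k : ℝ) ≤ (Real.exp 1 * (s + k) / k) ^ k := by
  have hkk : (0 : ℝ) < (k : ℝ) ^ k := by exact_mod_cast Nat.pow_self_pos
  have one_div_factorial_le : 1 / (k.factorial : ℝ) ≤ Real.exp 1 ^ k / (k : ℝ) ^ k := by
    rw [le_div_iff₀ hkk, one_div_mul_eq_div, ← Real.exp_nat_mul, mul_one]
    exact Real.pow_div_factorial_le_exp k k.cast_nonneg k
  calc (s.multichoose k : ℝ)
      ≤ ((s + k - 1 : ℕ) : ℝ) ^ k / k.factorial :=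
        Nat.multichoose_eq s k ▸ Nat.choose_le_pow_div k _
    _ ≤ ((s : ℝ) + k) ^ k * (1 / k.factorial) := by
        rw [mul_one_div]
        gcongr
        exact_mod_cast Nat.sub_le _ _
    _ ≤ ((s : ℝ) + k) ^ k * (Real.exp 1 ^ k / (k : ℝ) ^ k) := by gcongr
    _ = (Real.exp 1 * (s + k) / k) ^ k := by rw [div_pow, mul_pow]; ring

theorem multichoose_le_five_mul_pow {s k : ℕ} {b : ℝ} (hb : 1 ≤ b) (hs : 2 * s ≤ b * k) :
    (s.multichoose k : ℝ) ≤ (5 * b) ^ k := by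
  refine (multichoose_le_exp_mul_div_pow s k).trans ?_
  gcongr
  refine div_le_of_le_mul₀ k.cast_nonneg (by positivity) ?_
  have hk : (k : ℝ) ≤ b * k := le_mul_of_one_le_left k.cast_nonneg hb
  calc Real.exp 1 * (s + k) ≤ 3 * (b * k / 2 + b * k) := by
        gcongr
        · exact Real.exp_one_lt_three.le
        · linarith
    _ ≤ 5 * b * k := by linarith

theorem choose_mul_pow_add_one_le_two_pow {n s : ℕ} (hs : s ≤ n ^ 2) (d t : ℕ) :
    (n * n).choose t * (s ^ d) ^ t + 1 ≤ 2 ^ (2 * n * t * (d + 1) + 1) := by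
  have hpow : (n * n).choose t * (s ^ d) ^ t ≤ 2 ^ (2 * n * t * (d + 1)) :=
    calc (n * n).choose t * (s ^ d) ^ t ≤ (n * n) ^ t * ((n ^ 2) ^ d) ^ t := by
          gcongr
          exact Nat.choose_le_pow _ _
      _ = n ^ (2 * t * (d + 1)) := by ring
      _ ≤ (2 ^ n) ^ (2 * t * (d + 1)) := by
          gcongr
          exact Nat.lt_two_pow_self.le
      _ = 2 ^ (2 * n * t * (d + 1)) := by rw [← pow_mul]; ring
  have hone : 1 ≤ 2 ^ (2 * n * t * (d + 1)) := Nat.one_le_two_pow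
  rw [pow_succ]
  lia

theorem five_mul_mul_pow_lt_div_pow {d t : ℕ} {x : ℝ}
    (hx : 4 * 25 ^ d + 10 * d + 10 ≤ x) (ht : x ≤ t) :
    5 * d * x ^ (4 * d) < (x / (2 * 5 ^ d)) ^ t := by
  have h25 : (0 : ℝ) < 25 ^ d := by positivity
  have hx0 : 0 < x := by linarith
  have ht' : 8 * d + 2 ≤ t := by
    have : ((8 * d + 2 : ℕ) : ℝ) ≤ t := by push_cast; linarith
    exact_mod_cast this
  have le_sq : x ≤ (x / (2 * 5 ^ d)) ^ 2 := by
    have hsq : ((2 * 5 ^ d : ℝ)) ^ 2 = 4 * 25 ^ d := by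
      rw [mul_pow, pow_right_comm]; norm_num
    rw [div_pow, hsq, le_div_iff₀ (by positivity), sq]
    gcongr
    linarith
  have one_le : 1 ≤ x / (2 * 5 ^ d) :=
    (one_le_sq_iff₀ (by positivity)).mp (by linarith)
  calc 5 * d * x ^ (4 * d) < x * x ^ (4 * d) := by gcongr; linarith
    _ = x ^ (4 * d + 1) := (pow_succ' x _).symm
    _ ≤ ((x / (2 * 5 ^ d)) ^ 2) ^ (4 * d + 1) := by gcongr
    _ = (x / (2 * 5 ^ d)) ^ (8 * d + 2) := by rw [← pow_mul]; ring
    _ ≤ (x / (2 * 5 ^ d)) ^ t := pow_le_pow_right₀ one_le ht'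

theorem two_mul_mul_mul_add_one_le {d n t : ℕ} (hd : 0 < d) (hn : 0 < n) (htn : t ≤ n) :
    2 * n * t * (d + 1) + 1 ≤ 5 * d * n ^ 2 := by
  have hmul : 2 * n * t * (d + 1) ≤ 2 * n * n * (d + d) := by gcongr; exact hd
  have hone : 1 ≤ d * n ^ 2 := Nat.one_le_iff_ne_zero.mpr (by positivity)
  lia

theorem multichoose_mul_le_five_pow_mul_pow {d t s : ℕ} (hd : 0 < d) {x : ℝ} (hx : 1 ≤ x)
    (hxt : x ^ (2 * d - 1) ≤ t) (hs : (s : ℝ) ≤ x ^ (2 * d + 1) / 2) :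
    (s.multichoose (d * t) : ℝ) ≤ (5 ^ d * x ^ (2 * d)) ^ t := by
  have hdR : (1 : ℝ) ≤ d := by exact_mod_cast hd
  have hs' : 2 * s ≤ x ^ 2 * (d * t : ℕ) :=
    calc (2 * s : ℝ) ≤ x ^ (2 * d + 1) := by linarith
      _ = x ^ 2 * (1 * x ^ (2 * d - 1)) := by rw [one_mul, ← pow_add]; congr 1; lia
      _ ≤ x ^ 2 * (d * t : ℕ) := by push_cast; gcongr
  calc (s.multichoose (d * t) : ℝ) ≤ (5 * x ^ 2) ^ (d * t) :=
        multichoose_le_five_mul_pow (one_le_pow₀ hx) hs'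
    _ = (5 ^ d * x ^ (2 * d)) ^ t := by rw [pow_mul, mul_pow, ← pow_mul]

theorem mul_multichoose_lt_sq_div_pow {d n t s : ℕ} (hd : 0 < d) {x : ℝ}
    (hx : 4 * 25 ^ d + 10 * d + 10 ≤ x) (hn : (n : ℝ) = x ^ (2 * d))
    (hxt : x ^ (2 * d - 1) ≤ t) (htx : (t : ℝ) ≤ 2 * x ^ (2 * d - 1)) (htn : t ≤ n)
    (hs : (s : ℝ) ≤ x ^ (2 * d + 1) / 2) :
    (((2 * n * t * (d + 1) + 1) * s.multichoose (d * t) : ℕ) : ℝ) <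
      ((n : ℝ) ^ 2 / t) ^ t := by
  have h25 : (0 : ℝ) < 25 ^ d := by positivity
  have hx1 : 1 ≤ x := by linarith
  have hxt' : x ≤ t := (le_self_pow₀ hx1 (by lia)).trans hxt
  have hn1 : (1 : ℝ) ≤ n := hn ▸ one_le_pow₀ hx1
  have coeff_bits : ((2 * n * t * (d + 1) + 1 : ℕ) : ℝ) ≤ 5 * d * (n : ℝ) ^ 2 := by
    exact_mod_cast two_mul_mul_mul_add_one_le hd (by exact_mod_cast hn1) htn
  have monomials : (s.multichoose (d * t) : ℝ) ≤ (5 ^ d * n) ^ t :=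
    hn ▸ multichoose_mul_le_five_pow_mul_pow hd hx1 hxt hs
  have base_le : x / (2 * 5 ^ d) * (5 ^ d * n) ≤ (n : ℝ) ^ 2 / t := by
    rw [le_div_iff₀ (by linarith)]
    calc x / (2 * 5 ^ d) * (5 ^ d * n) * t
        ≤ x / (2 * 5 ^ d) * (5 ^ d * n) * (2 * x ^ (2 * d - 1)) := by gcongr
      _ = n * (x ^ (2 * d - 1) * x) := by field_simp
      _ = (n : ℝ) ^ 2 := by rw [pow_sub_one_mul (by lia), ← hn, sq]
  have hgrowth : 5 * d * (n : ℝ) ^ 2 < (x / (2 * 5 ^ d)) ^ t := by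
    rw [hn, ← pow_mul, show 2 * d * 2 = 4 * d by ring]
    exact five_mul_mul_pow_lt_div_pow hx hxt'
  rw [Nat.cast_mul]
  calc _ ≤ 5 * d * (n : ℝ) ^ 2 * (5 ^ d * n) ^ t := by gcongr
    _ < (x / (2 * 5 ^ d)) ^ t * (5 ^ d * n) ^ t := by gcongr
    _ = (x / (2 * 5 ^ d) * (5 ^ d * n)) ^ t := (mul_pow _ _ _).symm
    _ ≤ _ := by gcongr

theorem pow_two_mul_rpow_one_sub {d : ℕ} (hd : 0 < d) {x : ℝ} (hx : 0 ≤ x) :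
    (x ^ (2 * d)) ^ ((1 : ℝ) - 1 / (2 * d)) = x ^ (2 * d - 1) := by
  rw [← Real.rpow_natCast_mul hx, ← Real.rpow_natCast, Nat.cast_sub (by lia)]
  congr 1
  push_cast
  field_simp

theorem pow_two_mul_rpow_one_add {d : ℕ} (hd : 0 < d) {x : ℝ} (hx : 0 ≤ x) :
    (x ^ (2 * d)) ^ ((1 : ℝ) + 1 / (2 * d)) = x ^ (2 * d + 1) := by
  rw [← Real.rpow_natCast_mul hx, ← Real.rpow_natCast]
  congr 1
  push_cast
  field_simp

theorem choose_mul_pow_add_one_pow_multichoose_lt_two_rpow {d n t s : ℕ} (hd : 0 < d)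
    (hn : (4 * 25 ^ d + 10 * d + 10) ^ (2 * d) ≤ n)
    (ht : t = ⌈(n : ℝ) ^ ((1 : ℝ) - 1 / (2 * d))⌉₊)
    (hs : (s : ℝ) ≤ (n : ℝ) ^ ((1 : ℝ) + 1 / (2 * d)) / 2) :
    ((((n * n).choose t * (s ^ d) ^ t + 1) ^ s.multichoose (d * t) : ℕ) : ℝ) <
      2 ^ (((n : ℝ) ^ 2 / t) ^ t) := by
  -- In terms of `x` all the real exponents become natural.
  obtain ⟨x, hx0, hnx⟩ : ∃ x : ℝ, 0 ≤ x ∧ x ^ (2 * d) = n :=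
    ⟨_, by positivity, Real.rpow_inv_natCast_pow n.cast_nonneg (by lia)⟩
  have hx : 4 * 25 ^ d + 10 * d + 10 ≤ x :=
    le_of_pow_le_pow_left₀ (show 2 * d ≠ 0 by lia) hx0 (by rw [hnx]; exact_mod_cast hn)
  have hx1 : 1 ≤ x := by linarith [show (0 : ℝ) < 25 ^ d by positivity]
  rw [← hnx, pow_two_mul_rpow_one_sub hd hx0] at ht
  rw [← hnx, pow_two_mul_rpow_one_add hd hx0] at hs
  have hxt : x ^ (2 * d - 1) ≤ t := ht ▸ Nat.le_ceil _
  have htx : (t : ℝ) ≤ 2 * x ^ (2 * d - 1) := by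
    linarith [ht ▸ Nat.ceil_lt_add_one (pow_nonneg hx0 (2 * d - 1)),
      one_le_pow₀ (n := 2 * d - 1) hx1]
  have htn : t ≤ n := by
    rw [ht, Nat.ceil_le, ← hnx]
    exact pow_le_pow_right₀ hx1 (by lia)
  have hsn : s ≤ n ^ 2 := by
    have : (s : ℝ) ≤ (n : ℝ) ^ 2 :=
      calc (s : ℝ) ≤ x ^ (2 * d + 1) := hs.trans (half_le_self (by positivity))
        _ ≤ x ^ (2 * d * 2) := pow_le_pow_right₀ hx1 (by lia)
        _ = (n : ℝ) ^ 2 := by rw [pow_mul, hnx]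
    exact_mod_cast this
  calc _ ≤ (((2 ^ (2 * n * t * (d + 1) + 1)) ^ s.multichoose (d * t) : ℕ) : ℝ) := by
        exact_mod_cast Nat.pow_le_pow_left (choose_mul_pow_add_one_le_two_pow hsn d t) _
    _ = 2 ^ (((2 * n * t * (d + 1) + 1) * s.multichoose (d * t) : ℕ) : ℝ) := by
        rw [← pow_mul, Real.rpow_natCast, Nat.cast_pow, Nat.cast_ofNat]
    _ < 2 ^ (((n : ℝ) ^ 2 / t) ^ t) :=
        Real.rpow_lt_rpow_of_exponent_lt one_lt_two
          (mul_multichoose_lt_sq_div_pow hd hx hnx.symm hxt htx htn hs)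

end Estimates

theorem stmt16_general {R : Type*} [CommSemiring R] (d : ℕ) (hd : 0 < d) :
    ∃ n₀ : ℕ, ∀ n ≥ n₀, ∀ t : ℕ,
      t = ⌈(n : ℝ) ^ ((1 : ℝ) - 1 / (2 * d))⌉₊ →
      ∀ A : Matrix (Fin n) (Fin n) R,
        (2 : ℝ) ^ (((n : ℝ) ^ 2 / t) ^ t) ≤ (subsetSums (entryProducts t A)).ncard →
        ∀ (dims : Fin (d + 1) → ℕ) (h0 : dims ⟨0, Nat.succ_pos d⟩ = n)
          (hlast : dims (Fin.last d) = n)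
          (P : (i : Fin d) → Matrix (Fin (dims i.castSucc)) (Fin (dims i.succ)) R),
          (∀ i j, A i j = chainProd d dims P (Fin.cast h0.symm i) (Fin.cast hlast.symm j)) →
          (n : ℝ) ^ ((1 : ℝ) + 1 / (2 * d)) / 2 < totalSparsity P := by
  refine ⟨(4 * 25 ^ d + 10 * d + 10) ^ (2 * d), fun n hn t ht A hlow dims h0 hlast P hA => ?_⟩
  by_contra! hs
  have hA' : A = (chainProd d dims P).submatrix (Fin.cast h0.symm) (Fin.cast hlast.symm) :=
    Matrix.ext hA
  have upper := ncard_subsetSums_submatrix_chainProd_le P (Fin.cast h0.symm) (Fin.cast hlast.symm) t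
  rw [← hA', Fintype.card_fin] at upper
  exact (hlow.trans (Nat.cast_le.mpr upper)).not_gt
    (choose_mul_pow_add_one_pow_multichoose_lt_two_rpow hd hn ht hs)

theorem stmt16 (d : ℕ) (hd : 2 ≤ d) :
    ∃ n₀ : ℕ, ∀ n ≥ n₀, ∀ t : ℕ,
      t = ⌈(n : ℝ) ^ ((1 : ℝ) - 1 / (2 * d))⌉₊ →
      ∀ A : Matrix (Fin n) (Fin n) ℂ,
        (∃ e : Fin n × Fin n → ℕ, (∀ i j, A i j = 2 ^ e (i, j)) ∧
          ∀ T T' : Finset (Fin n × Fin n), T.card = t → T'.card = t →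
            (∑ p ∈ T, e p) = (∑ p ∈ T', e p) → T = T') →
        (2 : ℝ) ^ (((n : ℝ) ^ 2 / t) ^ t) ≤
          (Set.ncard {x : ℂ | ∃ S : Finset ℂ,
            (↑S ⊆ {y : ℂ | ∃ T : Finset (Fin n × Fin n), T.card = t ∧
              y = ∏ p ∈ T, A p.1 p.2}) ∧ x = ∑ y ∈ S, y} : ℝ) →
        ∀ (dims : Fin (d + 1) → ℕ) (h0 : dims ⟨0, Nat.succ_pos d⟩ = n)
          (hlast : dims (Fin.last d) = n)
          (P : (i : Fin d) → Matrix (Fin (dims i.castSucc)) (Fin (dims i.succ)) ℂ),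
          (∀ i : Fin d, dims i.castSucc ≤ n ^ 2) →
          (∀ i : Fin d, dims i.succ ≤ n ^ 2) →
          (∀ i j, A i j = chainProd d dims P (Fin.cast h0.symm i) (Fin.cast hlast.symm j)) →
          (n : ℝ) ^ ((1 : ℝ) + 1 / (2 * d)) / 2 <
            ((∑ i, Set.ncard {p : Fin (dims i.castSucc) × Fin (dims i.succ) |
              P i p.1 p.2 ≠ 0} : ℕ) : ℝ) := by
  obtain ⟨n₀, h⟩ := stmt16_general (R := ℂ) d (by lia)
  exact ⟨n₀, fun n hn t ht A _ hlow dims h0 hlast P _ _ => h n hn t ht A hlow dims h0 hlast P⟩
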